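/- Let (f_j)_{j≥1} be real numbers in [0,1] and (Δ_j)_{j≥1} probability distributions on the nonnegative integers, and define the delayed composite observation x_t = Σ_{j=1}^t f_j·Δ_j({t − j}) for t ≥ 1. Suppose the interval of integers [1, b] is partitioned into L consecutive blocks [t_1, t′_1], [t_2, t′_2], …, [t_L, t′_L] (so t_1 = 1, t_{l+1} = t′_l + 1, t′_L = b), and let the last block be [a, b] = [t_L, t′_L]. For each block l define C′_l = Σ_{j = t_l}^{t′_l} Δ_j({x > t′_l − j}). Then | Σ_{t=a}^{b} (x_t − f_t) | ≤ Σ_{l=1}^{L} C′_l ≤ L · max_{1 ≤ l ≤ L} C′_l. -/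

import Mathlib

open Finset

/-- The tail probability `p({x ≥ s})` of a distribution `p` on the nonnegative integers. -/
noncomputable def tailProb (p : ℕ → ℝ) (s : ℕ) : ℝ :=
  ∑' x : ℕ, if s ≤ x then p x else 0

/-!
The reward still in flight at time `T` grows by `f t` and shrinks by `x t` at each step `t`, so the
sum of `x t - f t` over the last block telescopes to the in-flight reward entering the block minus
the one leaving it. Across a block, older in-flight reward can only shrink, while the block itself
adds at most its escape mass; hence both quantities lie between `0` and the sum of the escape
masses.
-/

theorem tailProb_eq_tsum_add (p : ℕ → ℝ) (s : ℕ) : tailProb p s = ∑' x, p (x + s) := by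
  have support_subset : (Function.support fun x ↦ if s ≤ x then p x else 0) ⊆
      Set.range (· + s) := fun x hx ↦
    ⟨x - s, Nat.sub_add_cancel (by by_contra hsx; simp [hsx] at hx)⟩
  simpa [tailProb] using ((add_left_injective s).tsum_eq support_subset).symm

theorem tailProb_zero (p : ℕ → ℝ) : tailProb p 0 = ∑' x, p x :=
  tailProb_eq_tsum_add p 0

theorem tailProb_eq_add_tailProb_succ {p : ℕ → ℝ} (hp : Summable p) (s : ℕ) :
    tailProb p s = p s + tailProb p (s + 1) := by
  simpa only [tailProb_eq_tsum_add, zero_add, add_assoc, add_comm 1 s] using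
    ((summable_nat_add_iff s).mpr hp).tsum_eq_zero_add

theorem tailProb_nonneg {p : ℕ → ℝ} (hp : 0 ≤ p) (s : ℕ) : 0 ≤ tailProb p s := by
  rw [tailProb_eq_tsum_add]
  exact tsum_nonneg fun x ↦ hp (x + s)

theorem tailProb_antitone {p : ℕ → ℝ} (hp : 0 ≤ p) (hsum : Summable p) :
    Antitone (tailProb p) :=
  antitone_nat_of_succ_le fun s ↦ by
    rw [tailProb_eq_add_tailProb_succ hsum s]
    exact le_add_of_nonneg_left (hp s)

/-- The delayed composite observation at time `t`: what the rewards generated at times `1, …, t`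
deliver exactly at time `t`. -/
def delayedObservation (f : ℕ → ℝ) (Δ : ℕ → ℕ → ℝ) (t : ℕ) : ℝ :=
  ∑ j ∈ Icc 1 t, f j * Δ j (t - j)

/-- The reward generated at times `1, …, T - 1` that is delivered at time `T` or later. -/
noncomputable def inFlightReward (f : ℕ → ℝ) (Δ : ℕ → ℕ → ℝ) (T : ℕ) : ℝ :=
  ∑ j ∈ Ico 1 T, f j * tailProb (Δ j) (T - j)

/-- The delay mass of the half-open block `[s, t)` that falls at time `t` or later. The `C′_l` of
the block `[t_l, t′_l]` is `escapeMass Δ t_l (t′_l + 1)`; half-open blocks make consecutive blocks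
share an endpoint. -/
noncomputable def escapeMass (Δ : ℕ → ℕ → ℝ) (s t : ℕ) : ℝ :=
  ∑ j ∈ Ico s t, tailProb (Δ j) (t - j)

section InFlight

variable (f : ℕ → ℝ) (Δ : ℕ → ℕ → ℝ)

theorem sum_Icc_tailProb_eq_escapeMass (s t : ℕ) :
    ∑ j ∈ Icc s t, tailProb (Δ j) (t - j + 1) = escapeMass Δ s (t + 1) := by
  rw [escapeMass, Ico_add_one_right_eq_Icc]
  refine sum_congr rfl fun j hj ↦ ?_
  rw [Nat.sub_add_comm (mem_Icc.mp hj).2]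

theorem inFlightReward_one : inFlightReward f Δ 1 = 0 := by
  simp [inFlightReward]

variable {Δ}

theorem delayedObservation_add_inFlightReward_succ (hΔ : ∀ j, Summable (Δ j))
    {t : ℕ} (ht : 1 ≤ t) :
    delayedObservation f Δ t + inFlightReward f Δ (t + 1) =
      inFlightReward f Δ t + f t * ∑' x, Δ t x :=
  calc delayedObservation f Δ t + inFlightReward f Δ (t + 1)
    _ = ∑ j ∈ Ico 1 (t + 1), f j * tailProb (Δ j) (t - j) := by
      rw [delayedObservation, inFlightReward, ← Ico_add_one_right_eq_Icc, ← sum_add_distrib]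
      refine sum_congr rfl fun j hj ↦ ?_
      have hjt : j ≤ t := Nat.lt_succ_iff.mp (mem_Ico.mp hj).2
      rw [tailProb_eq_add_tailProb_succ (hΔ j) (t - j), Nat.sub_add_comm hjt, mul_add]
    _ = inFlightReward f Δ t + f t * ∑' x, Δ t x := by
      rw [sum_Ico_succ_top ht, Nat.sub_self, tailProb_zero, inFlightReward]

theorem sum_delayedObservation_sub (hΔ : ∀ j, HasSum (Δ j) 1)
    {s t : ℕ} (hs : 1 ≤ s) (hst : s ≤ t) :
    ∑ i ∈ Ico s t, (delayedObservation f Δ i - f i) =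
      inFlightReward f Δ s - inFlightReward f Δ t := by
  rw [← neg_sub (inFlightReward f Δ t), ← sum_Ico_sub _ hst, ← sum_neg_distrib]
  refine sum_congr rfl fun i hi ↦ ?_
  have conservation := delayedObservation_add_inFlightReward_succ f
    (fun j ↦ (hΔ j).summable) (hs.trans (mem_Ico.mp hi).1)
  rw [(hΔ i).tsum_eq] at conservation
  linarith

variable {f}

theorem escapeMass_nonneg (hΔ : ∀ j, 0 ≤ Δ j) (s t : ℕ) : 0 ≤ escapeMass Δ s t :=
  sum_nonneg fun j _ ↦ tailProb_nonneg (hΔ j) _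

theorem inFlightReward_nonneg (hf : 0 ≤ f) (hΔ : ∀ j, 0 ≤ Δ j) (T : ℕ) :
    0 ≤ inFlightReward f Δ T :=
  sum_nonneg fun j _ ↦ mul_nonneg (hf j) (tailProb_nonneg (hΔ j) _)

theorem inFlightReward_le_add_escapeMass (hf : ∀ j, f j ∈ Set.Icc (0 : ℝ) 1)
    (hΔ : ∀ j, 0 ≤ Δ j) (hsum : ∀ j, Summable (Δ j)) {s t : ℕ} (hs : 1 ≤ s) (hst : s ≤ t) :
    inFlightReward f Δ t ≤ inFlightReward f Δ s + escapeMass Δ s t := by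
  rw [inFlightReward, ← sum_Ico_consecutive _ hs hst]
  refine add_le_add (sum_le_sum fun j _ ↦ ?_) (sum_le_sum fun j _ ↦ ?_)
  · exact mul_le_mul_of_nonneg_left
      (tailProb_antitone (hΔ j) (hsum j) (Nat.sub_le_sub_right hst j)) (hf j).1
  · exact mul_le_of_le_one_left (tailProb_nonneg (hΔ j) _) (hf j).2

theorem inFlightReward_le_add_sum_escapeMass (hf : ∀ j, f j ∈ Set.Icc (0 : ℝ) 1)
    (hΔ : ∀ j, 0 ≤ Δ j) (hsum : ∀ j, Summable (Δ j)) {c : ℕ → ℕ} {m n : ℕ} (hmn : m ≤ n)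
    (hpos : 1 ≤ c m) (hc : MonotoneOn c (Set.Icc m n)) :
    inFlightReward f Δ (c n) ≤
      inFlightReward f Δ (c m) + ∑ l ∈ Ico m n, escapeMass Δ (c l) (c (l + 1)) := by
  induction n, hmn using Nat.le_induction with
  | base => simp
  | succ n hmn ih =>
    have hm_le : c m ≤ c n := hc ⟨le_rfl, by omega⟩ ⟨hmn, by omega⟩ hmn
    have hn_le : c n ≤ c (n + 1) := hc ⟨hmn, by omega⟩ ⟨by omega, le_rfl⟩ n.le_succ
    have bound_n := ih (hc.mono (Set.Icc_subset_Icc_right n.le_succ))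
    have last_block := inFlightReward_le_add_escapeMass hf hΔ hsum (hpos.trans hm_le) hn_le
    rw [sum_Ico_succ_top hmn]
    linarith

theorem abs_sum_delayedObservation_sub_le (hf : ∀ j, f j ∈ Set.Icc (0 : ℝ) 1)
    (hΔ : ∀ j, 0 ≤ Δ j) (hsum : ∀ j, HasSum (Δ j) 1) {s t : ℕ} (hs : 1 ≤ s) (hst : s ≤ t) :
    |∑ i ∈ Ico s t, (delayedObservation f Δ i - f i)| ≤
      inFlightReward f Δ s + escapeMass Δ s t := by
  have inFlight_nonneg := inFlightReward_nonneg (fun j ↦ (hf j).1) hΔ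
  rw [sum_delayedObservation_sub f hsum hs hst]
  exact abs_sub_le_of_nonneg_of_le (inFlight_nonneg s)
    (le_add_of_nonneg_right (escapeMass_nonneg hΔ s t)) (inFlight_nonneg t)
    (inFlightReward_le_add_escapeMass hf hΔ (fun j ↦ (hsum j).summable) hs hst)

end InFlight

/-- Block decomposition of the delay overflow: if `[1, b]` is partitioned into `L`
consecutive blocks, then the deviation of the delayed composite observations from the
rewards on the last block is bounded by the sum of the per-block escape masses `C′_l`,
which is at most `L` times their maximum. -/
theorem delay_block_decomposition_bound
    (f : ℕ → ℝ) (hf : ∀ j, f j ∈ Set.Icc (0 : ℝ) 1)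
    (Δ : ℕ → ℕ → ℝ) (hnn : ∀ j x, 0 ≤ Δ j x) (hsum : ∀ j, HasSum (Δ j) 1)
    (x : ℕ → ℝ) (hx : ∀ t : ℕ, x t = ∑ j ∈ Finset.Icc 1 t, f j * Δ j (t - j))
    (L : ℕ) (hL : 1 ≤ L)
    (ts te : ℕ → ℕ)
    (hts1 : ts 1 = 1)
    (hblocks : ∀ l ∈ Finset.Icc 1 L, ts l ≤ te l)
    (hnext : ∀ l : ℕ, 1 ≤ l → l < L → ts (l + 1) = te l + 1)
    (a b : ℕ) (ha : a = ts L) (hb : b = te L)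
    (C' : ℕ → ℝ)
    (hC' : ∀ l, C' l = ∑ j ∈ Finset.Icc (ts l) (te l), tailProb (Δ j) (te l - j + 1)) :
    |∑ t ∈ Finset.Icc a b, (x t - f t)| ≤ ∑ l ∈ Finset.Icc 1 L, C' l ∧
      ∑ l ∈ Finset.Icc 1 L, C' l ≤
        (L : ℝ) * (Finset.Icc 1 L).sup' (Finset.nonempty_Icc.mpr hL) C' := by
  refine ⟨?_, by simpa using sum_le_card_nsmul (Icc 1 L) C' _ fun l hl ↦ le_sup' C' hl⟩
  obtain rfl : x = delayedObservation f Δ := funext hx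
  obtain rfl : C' = fun l ↦ escapeMass Δ (ts l) (te l + 1) :=
    funext fun l ↦ (hC' l).trans (sum_Icc_tailProb_eq_escapeMass Δ (ts l) (te l))
  subst ha hb
  have block_le (l : ℕ) (hl : l ∈ Icc 1 L) : ts l ≤ te l + 1 := (hblocks l hl).trans (te l).le_succ
  have mono : MonotoneOn ts (Set.Icc 1 L) :=
    monotoneOn_of_le_add_one Set.ordConnected_Icc fun l _ hl hl' ↦
      (block_le l (mem_Icc.mpr hl)).trans_eq (hnext l hl.1 hl'.2).symm
  have one_le_start : 1 ≤ ts L := hts1.ge.trans (mono ⟨le_rfl, hL⟩ ⟨hL, le_rfl⟩ hL)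
  have entering_le : inFlightReward f Δ (ts L) ≤
      ∑ l ∈ Ico 1 L, escapeMass Δ (ts l) (te l + 1) := by
    have bound := inFlightReward_le_add_sum_escapeMass hf hnn (fun j ↦ (hsum j).summable)
      hL hts1.ge mono
    rw [hts1, inFlightReward_one, zero_add] at bound
    refine bound.trans_eq (sum_congr rfl fun l hl ↦ ?_)
    rw [hnext l (mem_Ico.mp hl).1 (mem_Ico.mp hl).2]
  rw [← Ico_add_one_right_eq_Icc 1 L, sum_Ico_succ_top hL, ← Ico_add_one_right_eq_Icc]
  exact (abs_sum_delayedObservation_sub_le hf hnn hsum one_le_start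
    (block_le L (right_mem_Icc.mpr hL))).trans (by gcongr)
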